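/- (Construction 1 is optimal) Let q be a prime power, F_{q^m} an extension field of F_q, and let l ≥ 1, r ≥ 1, s ≥ 0. Set n = l(r+1) and k = n − l − s − 1, and assume k ≥ 1. Let α_{i,j} ∈ F_{q^m} for i ∈ {1,…,l}, j ∈ {1,…,r+1}, and suppose the elements {α_{i,j} − α_{i,r+1} : i ∈ {1,…,l}, j ∈ {1,…,r}} are linearly independent over F_q. Let H be the (l+s+1)×n matrix over F_{q^m} whose columns are indexed by pairs (i,j), such that for i' ∈ {1,…,l} the entry of row i' in column (i,j) equals 1 if i = i' and 0 otherwise, and for e ∈ {0,1,…,s} the entry of row l+1+e in column (i,j) equals α_{i,j}^{q^e}. Then the linear code C = {x ∈ F_{q^m}^n : Hx = 0} has dimension k, every coordinate of C has locality r, and the minimum distance of C equals n − k − ⌈k/r⌉ + 2 (so C meets the Singleton-like bound with equality). -/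

import Mathlib

/-- Coordinate `i` of the linear code `C` has locality `r`. -/
def HasLocality {F ι : Type*} [Field F] [Fintype ι]
    (C : Submodule F (ι → F)) (i : ι) (r : ℕ) : Prop :=
  ∃ R : Finset ι, i ∉ R ∧ R.card ≤ r ∧
    ∀ c ∈ C, ∀ c' ∈ C, (∀ j ∈ R, c j = c' j) → c i = c' i

/-- The minimum distance of a linear code: the least Hamming weight of a nonzero codeword. -/
noncomputable def minDist {F ι : Type*} [Field F] [Fintype ι] [DecidableEq F]
    (C : Submodule F (ι → F)) : ℕ :=
  sInf {w | ∃ c ∈ C, c ≠ 0 ∧ hammingNorm c = w}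

/-!
Let `q = |K|` and let `N` be the number of global parity checks. Frobenius powers are `K`-linear,
so a linear relation between the rows of a Moore matrix is a polynomial of degree less than
`q ^ N` vanishing on the whole `K`-span of the evaluation points; if these points are `N`
independent elements, the polynomial has too many roots. Hence square Moore matrices of independent
elements are invertible, and a nonzero vector killed by a Moore matrix with `N` rows has weight
greater than `N`.

The coordinates of a codeword sum to zero on each block, so the global checks only see the
differences `α (i, j) - α (i, b i)`, whichever base point `b i` is chosen in each block. Choosing it
in the support of the codeword wherever possible gives weight greater than `N` plus the number of
blocks met, and the number of blocks met is then greater than `N / r`. Conversely, counting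
unknowns and equations produces a codeword supported on any `N + N / r + 2` coordinates lying in
`N / r + 1` blocks.
-/

section LinearCode

variable {F ι : Type*} [Field F] [Fintype ι]

theorem minDist_eq_of_exists_le_of_forall_ge [DecidableEq F] {C : Submodule F (ι → F)} {d : ℕ}
    (hle : ∃ c ∈ C, c ≠ 0 ∧ hammingNorm c ≤ d) (hge : ∀ c ∈ C, c ≠ 0 → d ≤ hammingNorm c) :
    minDist C = d := by
  obtain ⟨c, hc, hc0, hcd⟩ := hle
  have hd : d ∈ {w | ∃ c ∈ C, c ≠ 0 ∧ hammingNorm c = w} :=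
    ⟨c, hc, hc0, hcd.antisymm (hge c hc hc0)⟩
  refine (Nat.sInf_le hd).antisymm (le_csInf ⟨d, hd⟩ ?_)
  rintro w ⟨c', hc', hc'0, rfl⟩
  exact hge c' hc' hc'0

theorem hasLocality_of_sum_eq_zero {C : Submodule F (ι → F)} {S : Finset ι} {i : ι} {r : ℕ}
    (hi : i ∈ S) (hS : S.card ≤ r + 1) (hC : ∀ c ∈ C, ∑ j ∈ S, c j = 0) : HasLocality C i r := by
  classical
  refine ⟨S.erase i, S.notMem_erase i, ?_, fun c hc c' hc' hcc' => ?_⟩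
  · rw [Finset.card_erase_of_mem hi]
    omega
  · have hsum : c i + ∑ j ∈ S.erase i, c j = c' i + ∑ j ∈ S.erase i, c' j := by
      rw [Finset.add_sum_erase _ _ hi, Finset.add_sum_erase _ _ hi, hC c hc, hC c' hc']
    rwa [Finset.sum_congr rfl hcc', add_left_inj] at hsum

open Matrix in
theorem exists_ne_zero_mulVec_eq_zero_of_card_lt {m : Type*} (H : Matrix m ι F)
    {S : Finset ι} {T : Finset m} (hH : ∀ i ∉ T, ∀ j ∈ S, H i j = 0) (hTS : T.card < S.card) :
    ∃ c : ι → F, c ≠ 0 ∧ H *ᵥ c = 0 ∧ ∀ j ∉ S, c j = 0 := by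
  classical
  obtain ⟨y, hy, hy0⟩ := (Submodule.ne_bot_iff _).1 <|
    LinearMap.ker_ne_bot_of_finrank_lt
      (f := (H.submatrix ((↑) : T → m) ((↑) : S → ι)).mulVecLin) (by simpa using hTS)
  let c : ι → F := fun j => if hj : j ∈ S then y ⟨j, hj⟩ else 0
  have hcS : ∀ j ∉ S, c j = 0 := fun j hj => dif_neg hj
  have hcy : ∀ j : S, c j = y j := fun j => dif_pos j.2
  refine ⟨c, fun hc => hy0 (funext fun j => ?_), funext fun i => ?_, hcS⟩
  · rw [← hcy, hc]
    rfl
  · have hrestrict : (H *ᵥ c) i = ∑ j : S, H i j * y j := by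
      simp only [← hcy, mulVec, dotProduct]
      rw [Finset.sum_coe_sort S (fun j => H i j * c j)]
      exact (Finset.sum_subset S.subset_univ fun j _ hj => by rw [hcS j hj, mul_zero]).symm
    rw [hrestrict]
    by_cases hi : i ∈ T
    · exact congrFun hy ⟨i, hi⟩
    · exact Finset.sum_eq_zero fun j _ => by rw [hH i hi j j.2, zero_mul]

end LinearCode

section Moore

open Matrix Polynomial

section Semiring

variable {L ι : Type*} [CommSemiring L] {N : ℕ}

/-- The Moore matrix of a family `β`, with `N` rows: its rows are the entrywise powers of `β` with
exponents `1, q, …, q ^ (N - 1)`. -/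
def mooreMatrix (q N : ℕ) (β : ι → L) : Matrix (Fin N) ι L :=
  of fun e i => β i ^ q ^ (e : ℕ)

/-- The linearized polynomial `∑ e, c e * X ^ q ^ e`. -/
noncomputable def linearizedPolynomial (q : ℕ) (c : Fin N → L) : L[X] :=
  ∑ e : Fin N, monomial (q ^ (e : ℕ)) (c e)

theorem eval_linearizedPolynomial (q : ℕ) (c : Fin N → L) (x : L) :
    (linearizedPolynomial q c).eval x = ∑ e : Fin N, c e * x ^ q ^ (e : ℕ) := by
  simp only [linearizedPolynomial, eval_finsetSum, eval_monomial]

theorem coeff_linearizedPolynomial {q : ℕ} (hq : 1 < q) (c : Fin N → L) (e : Fin N) :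
    (linearizedPolynomial q c).coeff (q ^ (e : ℕ)) = c e := by
  have hinj {e' : Fin N} : q ^ (e' : ℕ) = q ^ (e : ℕ) ↔ e' = e := by
    rw [Nat.pow_right_inj hq, Fin.val_inj]
  simp [linearizedPolynomial, finsetSum_coeff, coeff_monomial, hinj]

theorem natDegree_linearizedPolynomial_lt {q : ℕ} (hq : 1 < q) (c : Fin N → L) :
    (linearizedPolynomial q c).natDegree < q ^ N := by
  refine (natDegree_sum_le_of_forall_le _ _ fun e _ => (natDegree_monomial_le _).trans ?_).trans_lt
    (Nat.sub_one_lt (pow_ne_zero N (Nat.ne_zero_of_lt hq)))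
  exact Nat.le_sub_one_of_lt (Nat.pow_lt_pow_right hq e.2)

end Semiring

variable {K L ι : Type*} [Field K] [Fintype K] [Field L] [Algebra K L] {N : ℕ}

theorem frobeniusAlgHom_pow_apply (e : ℕ) (x : L) :
    (FiniteField.frobeniusAlgHom K L ^ e) x = x ^ Fintype.card K ^ e := by
  rw [AlgHom.coe_pow, FiniteField.coe_frobeniusAlgHom, pow_iterate]

variable (K) in
theorem mooreMatrix_sub_apply (β γ : ι → L) (e : Fin N) (i : ι) :
    mooreMatrix (Fintype.card K) N (fun i => β i - γ i) e i =
      mooreMatrix (Fintype.card K) N β e i - mooreMatrix (Fintype.card K) N γ e i := by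
  simp only [mooreMatrix, of_apply, ← frobeniusAlgHom_pow_apply, map_sub]

theorem eval_linearizedPolynomial_sum_smul [Fintype ι] (c : Fin N → L) (a : ι → K)
    (β : ι → L) :
    (linearizedPolynomial (Fintype.card K) c).eval (∑ i, a i • β i) =
      ∑ i, a i • (linearizedPolynomial (Fintype.card K) c).eval (β i) := by
  simp only [eval_linearizedPolynomial, ← frobeniusAlgHom_pow_apply, map_sum, map_smul,
    Finset.mul_sum, Finset.smul_sum, mul_smul_comm]
  exact Finset.sum_comm

variable {β : ι → L}

theorem eq_zero_of_vecMul_mooreMatrix_eq_zero [Fintype ι] (hβ : LinearIndependent K β)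
    (hN : N ≤ Fintype.card ι) {c : Fin N → L} (hc : c ᵥ* mooreMatrix (Fintype.card K) N β = 0) :
    c = 0 := by
  classical
  have hq : 1 < Fintype.card K := Fintype.one_lt_card
  have hroot (i : ι) : (linearizedPolynomial (Fintype.card K) c).eval (β i) = 0 := by
    rw [eval_linearizedPolynomial]
    exact congrFun hc i
  have hzero : linearizedPolynomial (Fintype.card K) c = 0 := by
    refine eq_zero_of_natDegree_lt_card_of_eval_eq_zero _
      hβ.fintypeLinearCombination_injective (fun a => ?_) ?_
    · rw [Fintype.linearCombination_apply, eval_linearizedPolynomial_sum_smul]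
      simp only [hroot, smul_zero, Finset.sum_const_zero]
    · rw [Fintype.card_fun]
      exact (natDegree_linearizedPolynomial_lt hq c).trans_le
        (Nat.pow_le_pow_right Fintype.card_pos hN)
  funext e
  rw [← coeff_linearizedPolynomial hq c e, hzero, coeff_zero, Pi.zero_apply]

theorem det_mooreMatrix_ne_zero {β : Fin N → L} (hβ : LinearIndependent K β) :
    (mooreMatrix (Fintype.card K) N β).det ≠ 0 := by
  intro hdet
  obtain ⟨c, hc0, hc⟩ := exists_vecMul_eq_zero_iff.2 hdet
  exact hc0 (eq_zero_of_vecMul_mooreMatrix_eq_zero hβ (Fintype.card_fin N).ge hc)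

theorem lt_hammingNorm_of_mooreMatrix_mulVec_eq_zero [Fintype ι] [DecidableEq L]
    (hβ : LinearIndependent K β) {y : ι → L} (hy0 : y ≠ 0)
    (hy : mooreMatrix (Fintype.card K) N β *ᵥ y = 0) : N < hammingNorm y := by
  by_contra! hN
  let σ : Fin (hammingNorm y) ≃ {i // y i ≠ 0} :=
    (Fintype.equivFinOfCardEq (Fintype.card_subtype _)).symm
  have hσ : LinearIndependent K fun x => β (σ x) :=
    hβ.comp _ (Subtype.val_injective.comp σ.injective)
  have hker : (mooreMatrix (Fintype.card K) (hammingNorm y) fun x => β (σ x)) *ᵥ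
      (fun x => y (σ x)) = 0 := by
    funext e
    refine Eq.trans ?_ (congrFun hy (e.castLE hN))
    simp only [mulVec, dotProduct, mooreMatrix, of_apply, Fin.val_castLE]
    rw [σ.sum_comp fun i => β i ^ Fintype.card K ^ (e : ℕ) * y i]
    exact Fintype.sum_of_injective _ Subtype.val_injective _ _
      (fun i hi => by simpa using Or.inr hi) fun _ => rfl
  have hyσ := eq_zero_of_mulVec_eq_zero (det_mooreMatrix_ne_zero hσ) hker
  obtain ⟨i, hi⟩ := Function.ne_iff.1 hy0
  exact hi (by simpa using congrFun hyσ (σ.symm ⟨i, hi⟩))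

end Moore

section HammingNorm

variable {ι A : Type*} [Fintype ι] [Zero A] [DecidableEq A]

theorem hammingNorm_eq_add_card {r : ℕ} (b : ι → Fin (r + 1)) (c : ι × Fin (r + 1) → A) :
    hammingNorm c = hammingNorm (fun p : ι × Fin r => c (p.1, (b p.1).succAbove p.2)) +
      (Finset.univ.filter fun i => c (i, b i) ≠ 0).card := by
  simp only [hammingNorm, Finset.card_filter, Fintype.sum_prod_type,
    fun i => Fin.sum_univ_succAbove (fun j => if c (i, j) ≠ 0 then 1 else 0) (b i),
    Finset.sum_add_distrib]
  exact add_comm _ _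

theorem hammingNorm_le_card_mul {κ : Type*} [Fintype κ] {c : ι × κ → A} {T : Finset ι}
    (hT : ∀ i j, c (i, j) ≠ 0 → i ∈ T) :
    hammingNorm c ≤ T.card * Fintype.card κ := by
  rw [← Finset.card_univ, ← Finset.card_product]
  refine Finset.card_le_card fun p hp => ?_
  exact Finset.mk_mem_product (hT p.1 p.2 (Finset.mem_filter.1 hp).2) (Finset.mem_univ p.2)

end HammingNorm

section Blocks

variable {ι : Type*} {r : ℕ}

theorem eq_zero_of_succAbove_eq_zero {A : Type*} [AddCommMonoid A] (b : ι → Fin (r + 1))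
    {a : ι × Fin (r + 1) → A} (ha : ∀ i, ∑ j, a (i, j) = 0)
    (h : ∀ i j, a (i, (b i).succAbove j) = 0) : a = 0 := by
  funext ⟨i, j⟩
  refine (b i).succAboveCases ?_ (h i) j
  simpa [Fin.sum_univ_succAbove _ (b i), h] using ha i

variable [Fintype ι] {R M : Type*} [Ring R] [AddCommGroup M] [Module R M]

variable (R) in
/-- A family of vectors split into blocks is blockwise affinely independent if the only linear
relation between its members whose coefficients sum to zero on each block is the trivial one.
Equivalently, the direction spaces of the blocks are independent and each block is affinely
independent. -/
def BlockwiseAffineIndependent {κ : Type*} [Fintype κ] (α : ι × κ → M) : Prop :=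
  ∀ a : ι × κ → R, (∀ i, ∑ j, a (i, j) = 0) → ∑ p, a p • α p = 0 → a = 0

theorem sum_smul_eq_sum_smul_sub (b : ι → Fin (r + 1)) {a : ι × Fin (r + 1) → R}
    (ha : ∀ i, ∑ j, a (i, j) = 0) (x : ι × Fin (r + 1) → M) :
    ∑ p, a p • x p = ∑ p : ι × Fin r,
      a (p.1, (b p.1).succAbove p.2) • (x (p.1, (b p.1).succAbove p.2) - x (p.1, b p.1)) := by
  simp only [Fintype.sum_prod_type]
  refine Finset.sum_congr rfl fun i _ => ?_
  have hb : a (i, b i) = -∑ j, a (i, (b i).succAbove j) :=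
    eq_neg_of_add_eq_zero_left ((Fin.sum_univ_succAbove _ (b i)).symm.trans (ha i))
  rw [Fin.sum_univ_succAbove _ (b i), hb]
  simp only [smul_sub, Finset.sum_sub_distrib, neg_smul, Finset.sum_smul]
  exact neg_add_eq_sub _ _

theorem blockwiseAffineIndependent_iff_linearIndependent_sub (b : ι → Fin (r + 1))
    {α : ι × Fin (r + 1) → M} :
    BlockwiseAffineIndependent R α ↔ LinearIndependent R
      fun p : ι × Fin r => α (p.1, (b p.1).succAbove p.2) - α (p.1, b p.1) := by
  rw [Fintype.linearIndependent_iff]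
  constructor
  · intro hα g hg
    let a : ι × Fin (r + 1) → R := fun p =>
      (b p.1).insertNth (α := fun _ => R) (-∑ j, g (p.1, j)) (fun j => g (p.1, j)) p.2
    have hag (i : ι) (j : Fin r) : a (i, (b i).succAbove j) = g (i, j) :=
      Fin.insertNth_apply_succAbove ..
    have ha (i : ι) : ∑ j, a (i, j) = 0 := by
      simp [Fin.sum_univ_succAbove _ (b i), a]
    have ha0 : a = 0 := hα a ha <| by
      rw [sum_smul_eq_sum_smul_sub b ha]
      simpa only [hag] using hg
    intro p
    rw [← hag, ha0, Pi.zero_apply]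
  · intro hα a ha h
    rw [sum_smul_eq_sum_smul_sub b ha] at h
    exact eq_zero_of_succAbove_eq_zero b ha fun i j => hα _ h (i, j)

end Blocks

section Construction

open Matrix

variable {L ι κ : Type*} [Field L] {q N r : ℕ}

theorem mooreMatrix_sub_mulVec [Fintype ι] (K : Type*) [Field K] [Fintype K] [Algebra K L]
    (b : ι → Fin (r + 1)) (α : ι × Fin (r + 1) → L)
    {c : ι × Fin (r + 1) → L} (hc : ∀ i, ∑ j, c (i, j) = 0) :
    mooreMatrix (Fintype.card K) N
        (fun p : ι × Fin r => α (p.1, (b p.1).succAbove p.2) - α (p.1, b p.1)) *ᵥ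
      (fun p => c (p.1, (b p.1).succAbove p.2)) = mooreMatrix (Fintype.card K) N α *ᵥ c := by
  funext e
  have hsum := sum_smul_eq_sum_smul_sub b hc (mooreMatrix (Fintype.card K) N α e)
  simp only [smul_eq_mul, mul_comm (c _)] at hsum
  simp only [mulVec, dotProduct, mooreMatrix_sub_apply, hsum]
  rfl

variable [DecidableEq ι]

/-- The parity-check matrix of the construction, with columns indexed by block and position in the
block: one local check per block, summing the coordinates in it, followed by `N` global checks, the
rows of a Moore matrix. -/
def blockMooreMatrix (q N : ℕ) (α : ι × κ → L) : Matrix (ι ⊕ Fin N) (ι × κ) L :=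
  fromRows (of fun i p => if p.1 = i then 1 else 0) (mooreMatrix q N α)

variable [Fintype ι]

theorem mem_ker_blockMooreMatrix [Fintype κ] {α : ι × κ → L} {c : ι × κ → L} :
    c ∈ LinearMap.ker (blockMooreMatrix q N α).mulVecLin ↔
      (∀ i, ∑ j, c (i, j) = 0) ∧ mooreMatrix q N α *ᵥ c = 0 := by
  have hlocal (i : ι) :
      ((of fun i p => if p.1 = i then 1 else 0 : Matrix ι (ι × κ) L) *ᵥ c) i = ∑ j, c (i, j) := by
    simp only [mulVec, dotProduct, of_apply, ite_mul, one_mul, zero_mul]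
    rw [Fintype.sum_prod_type, Finset.sum_eq_single i]
    · simp
    · intro i' _ hi'
      simp [hi']
    · simp
  rw [LinearMap.mem_ker, mulVecLin_apply, blockMooreMatrix, fromRows_mulVec, ← Sum.elim_zero_zero,
    Sum.elim_eq_iff, funext_iff]
  simp only [hlocal, Pi.zero_apply]

theorem hasLocality_ker_blockMooreMatrix (α : ι × Fin (r + 1) → L) (p : ι × Fin (r + 1)) :
    HasLocality (LinearMap.ker (blockMooreMatrix q N α).mulVecLin) p r := by
  refine hasLocality_of_sum_eq_zero (S := {p.1} ×ˢ Finset.univ) (by simp) (by simp) fun c hc => ?_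
  rw [Finset.sum_product, Finset.sum_singleton]
  exact (mem_ker_blockMooreMatrix.1 hc).1 p.1

theorem exists_mem_ker_blockMooreMatrix_hammingNorm_le [DecidableEq L]
    (q : ℕ) (hN : N < Fintype.card ι * r) (α : ι × Fin (r + 1) → L) :
    ∃ c ∈ LinearMap.ker (blockMooreMatrix q N α).mulVecLin,
      c ≠ 0 ∧ hammingNorm c ≤ N + N / r + 2 := by
  have hr : 0 < r := Nat.pos_of_mul_pos_left (Nat.zero_lt_of_lt hN)
  obtain ⟨T, -, hT⟩ : ∃ T ⊆ (Finset.univ : Finset ι), T.card = N / r + 1 :=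
    Finset.exists_subset_card_eq ((Nat.div_lt_iff_lt_mul hr).2 hN)
  obtain ⟨S, hST, hS⟩ : ∃ S ⊆ T ×ˢ (Finset.univ : Finset (Fin (r + 1))),
      S.card = N + N / r + 2 := by
    refine Finset.exists_subset_card_eq ?_
    have hlt : N < (N / r + 1) * r := Nat.lt_mul_of_div_lt (Nat.lt_succ_self _) hr
    rw [Finset.card_product, hT, Finset.card_fin]
    linarith
  have hrows : ∀ i ∉ T.disjSum Finset.univ, ∀ p ∈ S, blockMooreMatrix q N α i p = 0 := by
    rintro (i | e) hi p hp
    · have hpi : p.1 ≠ i := by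
        rintro rfl
        exact hi (Finset.inl_mem_disjSum.2 (Finset.mem_product.1 (hST hp)).1)
      simp [blockMooreMatrix, hpi]
    · exact absurd (Finset.inr_mem_disjSum.2 (Finset.mem_univ e)) hi
  obtain ⟨c, hc0, hc, hcS⟩ := exists_ne_zero_mulVec_eq_zero_of_card_lt _ hrows <| by
    rw [Finset.card_disjSum, hT, hS, Finset.card_fin]
    omega
  refine ⟨c, hc, hc0, hS ▸ Finset.card_le_card fun p hp => ?_⟩
  by_contra hpS
  exact (Finset.mem_filter.1 hp).2 (hcS p hpS)

variable {K : Type*} [Field K] [Fintype K] [Algebra K L] {α : ι × Fin (r + 1) → L}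

theorem linearIndependent_row_blockMooreMatrix (hα : BlockwiseAffineIndependent K α)
    (hN : N ≤ Fintype.card ι * r) :
    LinearIndependent L (blockMooreMatrix (Fintype.card K) N α).row := by
  have hdiff := (blockwiseAffineIndependent_iff_linearIndependent_sub 0).1 hα
  rw [Fintype.linearIndependent_iff]
  intro g hg
  have hcol (p : ι × Fin (r + 1)) :
      g (Sum.inl p.1) + ((g ∘ Sum.inr) ᵥ* mooreMatrix (Fintype.card K) N α) p = 0 := by
    have hp := congrFun hg p
    simpa [Finset.sum_apply, Matrix.row, blockMooreMatrix, vecMul, dotProduct] using hp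
  have hglobal : g ∘ Sum.inr = 0 := by
    refine eq_zero_of_vecMul_mooreMatrix_eq_zero hdiff (by simpa using hN) (funext fun p => ?_)
    simp only [vecMul, dotProduct, mooreMatrix_sub_apply, mul_sub, Finset.sum_sub_distrib]
    exact sub_eq_zero.2 (add_left_cancel ((hcol (p.1, _)).trans (hcol (p.1, 0)).symm))
  rintro (i | e)
  · simpa [hglobal] using hcol (i, 0)
  · exact congrFun hglobal e

theorem finrank_ker_blockMooreMatrix_add (hα : BlockwiseAffineIndependent K α)
    (hN : N ≤ Fintype.card ι * r) :
    Module.finrank L (LinearMap.ker (blockMooreMatrix (Fintype.card K) N α).mulVecLin) +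
      (Fintype.card ι + N) = Fintype.card ι * (r + 1) := by
  have hrank := (linearIndependent_row_blockMooreMatrix hα hN).rank_matrix
  have hadd := (blockMooreMatrix (Fintype.card K) N α).mulVecLin.finrank_range_add_finrank_ker
  rw [← Matrix.rank, hrank, add_comm] at hadd
  simpa using hadd

theorem add_card_lt_hammingNorm_of_mem_ker_blockMooreMatrix [DecidableEq L]
    (hα : BlockwiseAffineIndependent K α) {c : ι × Fin (r + 1) → L} (hc0 : c ≠ 0)
    (hc : c ∈ LinearMap.ker (blockMooreMatrix (Fintype.card K) N α).mulVecLin) :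
    N + (Finset.univ.filter fun i => ∃ j, c (i, j) ≠ 0).card < hammingNorm c := by
  obtain ⟨hlocal, hglobal⟩ := mem_ker_blockMooreMatrix.1 hc
  have hbase (i : ι) : ∃ j, (∃ j', c (i, j') ≠ 0) → c (i, j) ≠ 0 := by
    by_cases hi : ∃ j', c (i, j') ≠ 0
    · exact hi.imp fun _ hj _ => hj
    · exact ⟨0, fun h => absurd h hi⟩
  choose b hb using hbase
  have hblocks (i : ι) : c (i, b i) ≠ 0 ↔ ∃ j, c (i, j) ≠ 0 := ⟨fun h => ⟨b i, h⟩, hb i⟩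
  rw [hammingNorm_eq_add_card b, Finset.filter_congr fun i _ => hblocks i]
  have hdiff := (blockwiseAffineIndependent_iff_linearIndependent_sub b).1 hα
  refine Nat.add_lt_add_right
    (lt_hammingNorm_of_mooreMatrix_mulVec_eq_zero hdiff (fun h => ?_) ?_) _
  · exact hc0 (eq_zero_of_succAbove_eq_zero b hlocal fun i j => congrFun h (i, j))
  · rw [mooreMatrix_sub_mulVec K b α hlocal, hglobal]

theorem minDist_ker_blockMooreMatrix [DecidableEq L] (hα : BlockwiseAffineIndependent K α)
    (hN : N < Fintype.card ι * r) :
    minDist (LinearMap.ker (blockMooreMatrix (Fintype.card K) N α).mulVecLin) = N + N / r + 2 := by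
  have hr : 0 < r := Nat.pos_of_mul_pos_left (Nat.zero_lt_of_lt hN)
  refine minDist_eq_of_exists_le_of_forall_ge
    (exists_mem_ker_blockMooreMatrix_hammingNorm_le _ hN α) fun c hc hc0 => ?_
  have hlower := add_card_lt_hammingNorm_of_mem_ker_blockMooreMatrix hα hc0 hc
  have hupper := hammingNorm_le_card_mul (c := c)
    (T := Finset.univ.filter fun i => ∃ j, c (i, j) ≠ 0)
    fun i j hij => Finset.mem_filter.2 ⟨Finset.mem_univ i, j, hij⟩
  rw [Fintype.card_fin, mul_add_one] at hupper
  have hdiv := (Nat.div_lt_iff_lt_mul hr).2 (lt_of_add_lt_add_right (hlower.trans_le hupper))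
  omega

end Construction

theorem ceil_div_eq_sub_div {k l N r : ℕ} (hr : 0 < r) (h : k + N = l * r) :
    ⌈(k : ℚ) / r⌉ = (l : ℤ) - (N / r : ℕ) := by
  have hr' : (r : ℚ) ≠ 0 := by exact_mod_cast hr.ne'
  have hk : (k : ℚ) / r = -((N : ℚ) / r) + l := by
    field_simp
    linarith [show (k : ℚ) + N = l * r by exact_mod_cast h]
  rw [hk, Int.ceil_add_natCast, Int.ceil_neg, Rat.floor_natCast_div_natCast]
  exact neg_add_eq_sub _ _

theorem stmt_14_general {K L : Type*} [Field K] [Fintype K] [Field L] [Algebra K L]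
    [DecidableEq L]
    {l r s n k : ℕ} (hn : n = l * (r + 1)) (hk : k + (l + s + 1) = n) (hk1 : 1 ≤ k)
    (α : Fin l → Fin (r + 1) → L)
    (hind : LinearIndependent K
      (fun p : Fin l × Fin r => α p.1 p.2.castSucc - α p.1 (Fin.last r)))
    (H : Matrix (Fin l ⊕ Fin (s + 1)) (Fin l × Fin (r + 1)) L)
    (hH1 : ∀ (i' : Fin l) (p : Fin l × Fin (r + 1)),
      H (Sum.inl i') p = if p.1 = i' then 1 else 0)
    (hH2 : ∀ (e : Fin (s + 1)) (p : Fin l × Fin (r + 1)),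
      H (Sum.inr e) p = α p.1 p.2 ^ Fintype.card K ^ (e : ℕ)) :
    Module.finrank L (LinearMap.ker H.mulVecLin) = k ∧
    (∀ p : Fin l × Fin (r + 1), HasLocality (LinearMap.ker H.mulVecLin) p r) ∧
    (minDist (LinearMap.ker H.mulVecLin) : ℤ) = (n : ℤ) - k - ⌈(k : ℚ) / r⌉ + 2 := by
  have hkr : k + (s + 1) = l * r := by linarith
  have hr : 0 < r := Nat.pos_of_mul_pos_left (by omega : 0 < l * r)
  have hα : BlockwiseAffineIndependent K (Function.uncurry α) :=
    (blockwiseAffineIndependent_iff_linearIndependent_sub fun _ => Fin.last r).2 <| by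
      simpa only [Fin.succAbove_last, Function.uncurry_apply_pair] using hind
  obtain rfl : H = blockMooreMatrix (Fintype.card K) (s + 1) (Function.uncurry α) := by
    ext (i | e) p
    exacts [hH1 i p, hH2 e p]
  refine ⟨?_, hasLocality_ker_blockMooreMatrix _, ?_⟩
  · have hdim := finrank_ker_blockMooreMatrix_add (N := s + 1) hα (by simp; omega)
    rw [Fintype.card_fin] at hdim
    omega
  · rw [minDist_ker_blockMooreMatrix hα (by simp; omega), ceil_div_eq_sub_div hr hkr, ← hk]
    push_cast
    ring

/-- Construction 1 is optimal: the code `{x : Hx = 0}` has dimension `k`, all symbol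
locality `r`, and minimum distance exactly `n - k - ⌈k/r⌉ + 2` (meeting the
Singleton-like bound). -/
theorem stmt_14 {K L : Type*} [Field K] [Fintype K] [Field L] [Fintype L] [Algebra K L]
    [DecidableEq L]
    {l r s n k : ℕ} (hl : 1 ≤ l) (hr : 1 ≤ r)
    (hn : n = l * (r + 1)) (hk : k + (l + s + 1) = n) (hk1 : 1 ≤ k)
    (α : Fin l → Fin (r + 1) → L)
    (hind : LinearIndependent K
      (fun p : Fin l × Fin r => α p.1 p.2.castSucc - α p.1 (Fin.last r)))
    (H : Matrix (Fin l ⊕ Fin (s + 1)) (Fin l × Fin (r + 1)) L)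
    (hH1 : ∀ (i' : Fin l) (p : Fin l × Fin (r + 1)),
      H (Sum.inl i') p = if p.1 = i' then 1 else 0)
    (hH2 : ∀ (e : Fin (s + 1)) (p : Fin l × Fin (r + 1)),
      H (Sum.inr e) p = α p.1 p.2 ^ Fintype.card K ^ (e : ℕ)) :
    Module.finrank L (LinearMap.ker H.mulVecLin) = k ∧
    (∀ p : Fin l × Fin (r + 1), HasLocality (LinearMap.ker H.mulVecLin) p r) ∧
    (minDist (LinearMap.ker H.mulVecLin) : ℤ) = (n : ℤ) - k - ⌈(k : ℚ) / r⌉ + 2 := by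
  exact stmt_14_general hn hk hk1 α hind H hH1 hH2
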